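/- Let $\nu\geq 0$, $\kappa>0$, and $\Lambda(z)=\prod_{k=1}^{\infty}\left(1+\frac{iz}{(\kappa j_{\nu,k})^2}\right)$. Then $|\Lambda(z)|\leq \exp(\sqrt{|z|}/\kappa)$ for all $z\in\mathbb{C}$, and $|\Lambda(x)|\leq\exp(\sqrt{|x|}/(\sqrt{2}\kappa))$ for all real $x$. -/

import Mathlib

open MeasureTheory Set

/-- Bessel function of the first kind (real argument, via its power series). -/
noncomputable def besselJ (ν x : ℝ) : ℝ :=
  ∑' m : ℕ, ((-1 : ℝ) ^ m / ((m.factorial : ℝ) * Real.Gamma ((m : ℝ) + ν + 1))) *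
    (x / 2) ^ (2 * (m : ℝ) + ν)

/-- `j` enumerates (in increasing order, starting at `k = 0` for the first one)
all the positive zeros of the Bessel function `J_ν`. -/
def IsBesselZeros (ν : ℝ) (j : ℕ → ℝ) : Prop :=
  StrictMono j ∧ (∀ k, 0 < j k) ∧ (∀ k, besselJ ν (j k) = 0) ∧
    (∀ x, 0 < x → besselJ ν x = 0 → ∃ k, j k = x)


open ProbabilityTheory in
lemma bz_moment (ν : ℝ) (hν : 0 ≤ ν) (m : ℕ) :
    ∫ s, s ^ m ∂(betaMeasure (1/2) (ν + 1/2)) =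
      ((2 * m).factorial : ℝ) * Real.Gamma (ν + 1) /
        (4 ^ m * m.factorial * Real.Gamma (m + ν + 1)) := by
  have hb : (0:ℝ) < ν + 1/2 := by linarith
  have hm : (0:ℝ) < 1/2 + m := by positivity
  have h1 : ∫ s, betaPDFReal (1/2 + m) (ν + 1/2) s = 1 := by
    rw [integral_eq_lintegral_of_nonneg_ae]
    · have := lintegral_betaPDF_eq_one hm hb
      unfold betaPDF at this
      rw [this]; simp
    · refine Filter.Eventually.of_forall fun x => ?_
      by_cases hx : 0 < x ∧ x < 1
      · exact (betaPDFReal_pos hx.1 hx.2 hm hb).le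
      · simp [betaPDFReal, hx]
    · exact (stronglyMeasurable_betaPDFReal _ _).aestronglyMeasurable
  have hB := beta_pos (α := 1/2) (by norm_num) hb
  have hBm := beta_pos hm hb
  have h2 : ∫ s, s ^ m ∂(betaMeasure (1/2) (ν + 1/2)) =
      beta (1/2 + m) (ν + 1/2) / beta (1/2) (ν + 1/2) := by
    unfold betaMeasure
    rw [integral_withDensity_eq_integral_toReal_smul]
    · trans (beta (1/2 + m) (ν + 1/2) / beta (1/2) (ν + 1/2)) *
          ∫ s, betaPDFReal (1/2 + m) (ν + 1/2) s
      swap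
      · rw [h1, mul_one]
      rw [← integral_const_mul]
      refine integral_congr_ae (Filter.Eventually.of_forall fun x => ?_)
      simp only [betaPDF, smul_eq_mul]
      by_cases hx : 0 < x ∧ x < 1
      · rw [ENNReal.toReal_ofReal (betaPDFReal_pos (α := 1/2) hx.1 hx.2 (by norm_num) hb).le]
        simp only [betaPDFReal, if_pos hx]
        rw [show (1/2 + (m:ℝ) - 1) = (1/2 - 1) + m by ring, Real.rpow_add hx.1, Real.rpow_natCast]
        generalize beta (1/2 + m) (ν + 1/2) = A at hBm ⊢
        generalize beta (1/2) (ν + 1/2) = B at hB ⊢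
        field_simp
      · simp [betaPDFReal, hx]
    · exact (measurable_betaPDFReal _ _).ennreal_ofReal
    · simp [betaPDF]
  rw [h2]
  have key : ∀ m : ℕ, Real.Gamma (1/2 + m) = ((2*m).factorial : ℝ) / (4 ^ m * m.factorial) * Real.Gamma (1/2) := by
    intro m
    induction m with
    | zero => simp
    | succ n ih =>
      have : (1/2 + ((n+1 : ℕ):ℝ)) = (1/2 + n) + 1 := by push_cast; ring
      rw [this, Real.Gamma_add_one (by positivity), ih]
      rw [show 2 * (n+1) = (2*n+1)+1 by ring, Nat.factorial_succ (2*n+1), Nat.factorial_succ (2*n),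
          Nat.factorial_succ n]
      push_cast
      field_simp
      ring
  unfold beta
  have g1 := Real.Gamma_pos_of_pos hb
  have g2 := Real.Gamma_pos_of_pos (s := 1/2) (by norm_num)
  have g3 := Real.Gamma_pos_of_pos (s := ν + 1) (by linarith)
  have g4 := Real.Gamma_pos_of_pos (s := m + ν + 1) (by positivity)
  rw [key, show (1/2 : ℝ) + m + (ν + 1/2) = m + ν + 1 by ring,
    show (1/2 : ℝ) + (ν + 1/2) = ν + 1 by ring]
  field_simp

lemma bz_ae (ν : ℝ) : ∀ᵐ s ∂(ProbabilityTheory.betaMeasure (1/2) (ν + 1/2)), 0 < s ∧ s < 1 := by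
  unfold ProbabilityTheory.betaMeasure
  have hm : Measurable (ProbabilityTheory.betaPDF (1/2) (ν + 1/2)) :=
    (ProbabilityTheory.measurable_betaPDFReal _ _).ennreal_ofReal
  rw [ae_withDensity_iff hm]
  refine Filter.Eventually.of_forall fun x hx => ?_
  by_contra h
  simp [ProbabilityTheory.betaPDF, ProbabilityTheory.betaPDFReal, h] at hx

noncomputable def bzM (ν : ℝ) (m : ℕ) : ℝ :=
  ∫ s, s ^ m ∂(ProbabilityTheory.betaMeasure (1/2) (ν + 1/2))

noncomputable def bzF (ν : ℝ) (u : ℂ) : ℂ :=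
  ∑' m : ℕ, ((-1) ^ m * (bzM ν m : ℂ) / ((2 * m).factorial : ℂ)) * u ^ m

lemma bzM_bound (ν : ℝ) (hν : 0 ≤ ν) (m : ℕ) : |bzM ν m| ≤ 1 := by
  have := ProbabilityTheory.isProbabilityMeasureBeta (α := 1/2) (β := ν + 1/2)
    (by norm_num) (by linarith)
  have := norm_integral_le_of_norm_le_const (μ := ProbabilityTheory.betaMeasure (1/2) (ν + 1/2))
    (f := fun s => s ^ m) (C := 1) ?_
  · rw [probReal_univ, mul_one] at this
    exact this
  · filter_upwards [bz_ae ν] with s hs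
    rw [norm_pow, Real.norm_eq_abs, abs_of_pos hs.1]
    exact pow_le_one₀ hs.1.le hs.2.le

lemma bz_term_bound (ν : ℝ) (hν : 0 ≤ ν) (m : ℕ) (u : ℂ) (R : ℝ) (hu : ‖u‖ ≤ R) :
    ‖((-1) ^ m * (bzM ν m : ℂ) / ((2 * m).factorial : ℂ)) * u ^ m‖ ≤ R ^ m / (m.factorial : ℝ) := by
  have h := bzM_bound ν hν m
  have hR : 0 ≤ R := (norm_nonneg _).trans hu
  rw [norm_mul, norm_div, norm_mul, norm_pow, norm_pow]
  simp only [norm_neg, norm_one, one_pow, one_mul, Complex.norm_real, Real.norm_eq_abs,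
    Complex.norm_natCast]
  have h2 : (m.factorial : ℝ) ≤ ((2*m).factorial : ℝ) := by
    exact_mod_cast Nat.factorial_le (by omega)
  have h3 : (0:ℝ) < m.factorial := by positivity
  calc |bzM ν m| / ((2*m).factorial : ℝ) * ‖u‖ ^ m ≤ 1 / (m.factorial : ℝ) * R ^ m := by gcongr
    _ = _ := by ring

lemma bzF_diff (ν : ℝ) (hν : 0 ≤ ν) : Differentiable ℂ (bzF ν) := by
  intro u
  have : DifferentiableOn ℂ (bzF ν) (Metric.ball 0 (‖u‖ + 1)) := by
    apply Complex.differentiableOn_tsum_of_summable_norm (Real.summable_pow_div_factorial (‖u‖ + 1))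
    · intro i; fun_prop
    · exact Metric.isOpen_ball
    · intro i w hw
      exact bz_term_bound ν hν i w _ (by simpa using (le_of_lt (by simpa using hw : ‖w‖ < ‖u‖ + 1)))
  exact this.differentiableAt (Metric.isOpen_ball.mem_nhds (by simp))

lemma bzF_zero (ν : ℝ) (hν : 0 ≤ ν) : bzF ν 0 = 1 := by
  have := ProbabilityTheory.isProbabilityMeasureBeta (α := 1/2) (β := ν + 1/2)
    (by norm_num) (by linarith)
  unfold bzF
  rw [tsum_eq_single 0]
  · have : bzM ν 0 = 1 := by
      simp only [bzM, pow_zero, integral_const, probReal_univ, smul_eq_mul, mul_one]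
    simp [this]
  · intro m hm; simp [hm]

lemma bz_norm_cos (w : ℂ) : ‖Complex.cos w‖ ≤ Real.exp |w.im| := by
  rw [Complex.cos]
  have h1 : ‖Complex.exp (w * Complex.I)‖ ≤ Real.exp |w.im| := by
    rw [Complex.norm_exp]; apply Real.exp_le_exp.2; simpa using neg_le_abs w.im
  have h2 : ‖Complex.exp (-w * Complex.I)‖ ≤ Real.exp |w.im| := by
    rw [Complex.norm_exp]; apply Real.exp_le_exp.2; simpa using le_abs_self w.im
  rw [norm_div]
  have := norm_add_le (Complex.exp (w * Complex.I)) (Complex.exp (-w * Complex.I))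
  simp only [Complex.norm_ofNat]
  linarith

lemma bzF_bound (ν : ℝ) (hν : 0 ≤ ν) (w : ℂ) : ‖bzF ν (w ^ 2)‖ ≤ Real.exp |w.im| := by
  have := ProbabilityTheory.isProbabilityMeasureBeta (α := 1/2) (β := ν + 1/2)
    (by norm_num) (by linarith)
  set μ := ProbabilityTheory.betaMeasure (1/2) (ν + 1/2) with hμ
  let f : ℕ → ℝ → ℂ := fun m s =>
    ((-1) ^ m / ((2 * m).factorial : ℂ)) * (w ^ 2) ^ m * ((s ^ m : ℝ) : ℂ)
  have hb : ∀ m, ∀ᵐ s ∂μ, ‖f m s‖ ≤ (‖w‖ ^ 2) ^ m / (m.factorial : ℝ) := by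
    intro m
    filter_upwards [bz_ae ν] with s hs
    simp only [f, norm_mul, norm_div, norm_pow, norm_neg, norm_one, one_pow,
      Complex.norm_real, Complex.norm_natCast]
    have h2 : (m.factorial : ℝ) ≤ ((2*m).factorial : ℝ) := by
      exact_mod_cast Nat.factorial_le (by omega)
    have h3 : (0:ℝ) < m.factorial := by positivity
    have h4 : ‖s‖ ^ m ≤ 1 := by
      rw [Real.norm_eq_abs, abs_of_pos hs.1]
      exact pow_le_one₀ hs.1.le hs.2.le
    calc 1 / ((2*m).factorial : ℝ) * (‖w‖ ^ 2) ^ m * ‖s‖ ^ m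
        ≤ 1 / (m.factorial : ℝ) * (‖w‖ ^ 2) ^ m * 1 := by gcongr
      _ = _ := by ring
  have hmeas : ∀ m, AEStronglyMeasurable (f m) μ := by
    intro m
    apply Continuous.aestronglyMeasurable
    fun_prop
  have hs := hasSum_integral_of_dominated_convergence (μ := μ) (F := f)
    (f := fun s => ∑' m, f m s)
    (fun m _ => (‖w‖ ^ 2) ^ m / (m.factorial : ℝ)) hmeas hb
    (Filter.Eventually.of_forall fun _ => Real.summable_pow_div_factorial _)
    (integrable_const _)
    (by
      have : ∀ᵐ s ∂μ, ∀ m, ‖f m s‖ ≤ (‖w‖ ^ 2) ^ m / (m.factorial : ℝ) := ae_all_iff.2 hb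
      filter_upwards [this] with s hs
      exact (Summable.of_norm_bounded (Real.summable_pow_div_factorial _) hs).hasSum)
  have e1 : bzF ν (w ^ 2) = ∫ s, ∑' m, f m s ∂μ := by
    rw [← hs.tsum_eq]
    unfold bzF
    congr 1; ext m
    simp only [f]
    rw [integral_const_mul, integral_complex_ofReal, bzM]
    ring
  rw [e1]
  have := norm_integral_le_of_norm_le_const (μ := μ)
    (f := fun s => ∑' m, f m s) (C := Real.exp |w.im|) ?_
  · simpa using this
  · filter_upwards [bz_ae ν] with s hs
    have e2 : ∑' m, f m s = Complex.cos (w * (Real.sqrt s : ℂ)) := by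
      rw [Complex.cos_eq_tsum]
      congr 1; ext m
      simp only [f]
      have : ((Real.sqrt s : ℂ)) ^ 2 = (s : ℂ) := by
        norm_cast; rw [Real.sq_sqrt hs.1.le]
      rw [mul_pow, pow_mul (Real.sqrt s : ℂ), this, pow_mul w]
      push_cast; ring
    rw [e2]
    refine (bz_norm_cos _).trans (Real.exp_le_exp.2 ?_)
    rw [Complex.im_mul_ofReal, abs_mul, abs_of_nonneg (Real.sqrt_nonneg _)]
    exact mul_le_of_le_one_right (abs_nonneg _) (Real.sqrt_le_one.2 hs.2.le)

lemma bzF_zero_of_bessel (ν : ℝ) (hν : 0 ≤ ν) (x : ℝ) (hx : 0 < x) (h : besselJ ν x = 0) :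
    bzF ν ((x : ℂ) ^ 2) = 0 := by
  have g3 := Real.Gamma_pos_of_pos (s := ν + 1) (by linarith)
  have hxp : 0 < (x/2) ^ ν := Real.rpow_pos_of_pos (by positivity) _
  have e : bzF ν ((x : ℂ) ^ 2) = ((Real.Gamma (ν+1) / (x/2) ^ ν * besselJ ν x : ℝ) : ℂ) := by
    unfold bzF besselJ
    rw [← tsum_mul_left, Complex.ofReal_tsum]
    congr 1; ext m
    rw [bzM, bz_moment ν hν]
    norm_cast
    push_cast
    have g4 := Real.Gamma_pos_of_pos (s := m + ν + 1) (by positivity)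
    rw [Real.rpow_add (by positivity), show (2 * (m:ℝ)) = ((2 * m : ℕ) : ℝ) by push_cast; ring,
      Real.rpow_natCast, div_pow x 2 (2*m), pow_mul 2 2 m, pow_mul x 2 m]
    have : ((2*m).factorial : ℝ) ≠ 0 := by positivity
    field_simp
    norm_num
  rw [e, h]; simp

lemma bz_jensen_gen (F : ℂ → ℂ) (hF : Differentiable ℂ F) (h0 : F 0 = 1) (T : Finset ℂ)
    (hT : ∀ u ∈ T, F u = 0) (R : ℝ) (hR : 0 < R) :
    ∑ u ∈ T, Real.posLog (R / ‖u‖) ≤ Real.circleAverage (fun z => Real.log ‖F z‖) 0 R := by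
  classical
  have han : AnalyticOnNhd ℂ F (Metric.closedBall 0 |R|) := fun z _ => hF.analyticAt z
  rw [han.circleAverage_log_norm hR.ne' (by simp [h0]), h0]
  simp only [norm_one, Real.log_one, add_zero, zero_sub, norm_neg]
  set D := MeromorphicOn.divisor F (Metric.closedBall 0 |R|) with hD
  have hfin : (D : ℂ → ℤ).support.Finite := D.finiteSupport (isCompact_closedBall 0 |R|)
  have hDnn : ∀ u, 0 ≤ D u := fun u => MeromorphicOn.AnalyticOnNhd.divisor_nonneg han u
  have hDout : ∀ u, R < ‖u‖ → D u = 0 := by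
    intro u hu
    apply Function.locallyFinsuppWithin.apply_eq_zero_of_notMem
    simpa [abs_of_pos hR] using hu
  have hgnn : ∀ u, 0 ≤ (D u : ℝ) * Real.log (R * ‖u‖⁻¹) := by
    intro u
    rcases lt_or_ge R ‖u‖ with h | h
    · simp [hDout u h]
    · have h1 : (0:ℝ) ≤ D u := by exact_mod_cast hDnn u
      rcases eq_or_ne u 0 with rfl | hu
      · simp
      · apply mul_nonneg h1 (Real.log_nonneg _)
        rw [← div_eq_mul_inv, one_le_div (norm_pos_iff.2 hu)]
        exact h
  rw [finsum_eq_sum_of_support_subset (s := hfin.toFinset ∪ T)]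
  · calc ∑ u ∈ T, Real.posLog (R / ‖u‖) ≤ ∑ u ∈ T, (D u : ℝ) * Real.log (R * ‖u‖⁻¹) := by
          apply Finset.sum_le_sum
          intro u hu
          have hu0 : u ≠ 0 := by
            rintro rfl
            have := hT 0 hu
            rw [h0] at this; exact one_ne_zero this
          have hpos := norm_pos_iff.2 hu0
          rcases lt_or_ge R ‖u‖ with h | h
          · rw [Real.posLog_eq_zero_iff _ |>.2]
            · exact hgnn u
            · rw [abs_of_nonneg (by positivity), div_le_one hpos]; exact h.le
          · have hmem : u ∈ Metric.closedBall (0:ℂ) |R| := by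
              simpa [abs_of_pos hR] using h
            have h1 : 1 ≤ D u := by
              have hne : analyticOrderAt F u ≠ 0 := by
                rw [(han u hmem).analyticOrderAt_ne_zero]; exact hT u hu
              have hnt : analyticOrderAt F u ≠ ⊤ := by
                intro htop
                rw [analyticOrderAt_eq_top] at htop
                have hu' : AnalyticOnNhd ℂ F univ := fun z _ => hF.analyticAt z
                have := hu'.eqOn_zero_of_preconnected_of_eventuallyEq_zero
                  isPreconnected_univ (mem_univ u) htop (mem_univ 0)
                rw [h0] at this
                exact one_ne_zero this
              rw [hD, MeromorphicOn.AnalyticOnNhd.divisor_apply han hmem]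
              obtain ⟨n, hn⟩ := ENat.ne_top_iff_exists.1 hnt
              rw [← hn] at hne ⊢
              have hn0 : n ≠ 0 := by
                rintro rfl; simp at hne
              have : ((ENat.map (Nat.cast : ℕ → ℤ) (n : ℕ∞))).untop₀ = (n : ℤ) := by simp
              rw [this]; omega
            have h1' : (1:ℝ) ≤ D u := by exact_mod_cast h1
            have h2 : 1 ≤ R / ‖u‖ := by rwa [one_le_div hpos]
            rw [Real.posLog_eq_log (by rw [abs_of_nonneg (by positivity)]; exact h2), ← div_eq_mul_inv]
            have := Real.log_nonneg h2
            nlinarith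
      _ ≤ _ := Finset.sum_le_sum_of_subset_of_nonneg Finset.subset_union_right
            (fun u _ _ => hgnn u)
  · intro u hu
    simp only [Finset.coe_union, Set.Finite.coe_toFinset]
    left
    intro h
    apply hu
    simp [h]

lemma bz_avg (ν : ℝ) (hν : 0 ≤ ν) (r : ℝ) (hr : 0 < r) :
    Real.circleAverage (fun z => Real.log ‖bzF ν z‖) 0 (r ^ 2) ≤ 2 * r / Real.pi := by
  rw [Real.circleAverage_def]
  have hcirc : CircleIntegrable (fun z => Real.log ‖bzF ν z‖) 0 (r^2) :=
    MeromorphicOn.circleIntegrable_log_norm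
      (fun z _ => ((bzF_diff ν hν).analyticAt z).meromorphicAt)
  have h2 : ∫ θ in (0:ℝ)..2 * Real.pi, Real.log ‖bzF ν (circleMap 0 (r^2) θ)‖ ≤
      ∫ θ in (0:ℝ)..2 * Real.pi, r * Real.sin (θ / 2) := by
    apply intervalIntegral.integral_mono_on (by positivity) hcirc
    · apply Continuous.intervalIntegrable; fun_prop
    · intro θ hθ
      have e : circleMap 0 (r^2) θ = ((r : ℂ) * Complex.exp ((θ/2 : ℝ) * Complex.I)) ^ 2 := by
        rw [circleMap, mul_pow, ← Complex.exp_nat_mul]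
        push_cast
        rw [zero_add]
        congr 2; ring
      rw [e]
      have hsin : 0 ≤ Real.sin (θ/2) :=
        Real.sin_nonneg_of_nonneg_of_le_pi (by linarith [hθ.1]) (by linarith [hθ.2])
      have hb := bzF_bound ν hν ((r : ℂ) * Complex.exp ((θ/2 : ℝ) * Complex.I))
      rw [Complex.im_ofReal_mul, Complex.exp_ofReal_mul_I_im, abs_of_nonneg (by positivity)] at hb
      rcases eq_or_ne ‖bzF ν (((r : ℂ) * Complex.exp ((θ/2 : ℝ) * Complex.I)) ^ 2)‖ 0 with h | h
      · simp only [h, Real.log_zero]; positivity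
      · exact (Real.log_le_iff_le_exp (lt_of_le_of_ne (norm_nonneg _) h.symm)).2 hb
  have h3 : ∫ θ in (0:ℝ)..2 * Real.pi, r * Real.sin (θ / 2) = 4 * r := by
    rw [intervalIntegral.integral_const_mul, intervalIntegral.integral_comp_div _ two_ne_zero]
    simp
    ring
  rw [h3] at h2
  rw [smul_eq_mul]
  have hpi := Real.pi_pos
  calc (2 * Real.pi)⁻¹ * _ ≤ (2 * Real.pi)⁻¹ * (4 * r) := by gcongr
    _ = _ := by field_simp; ring

lemma bz_jensen (ν : ℝ) (hν : 0 ≤ ν) (j : ℕ → ℝ) (hj : IsBesselZeros ν j) (S : Finset ℕ)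
    (r : ℝ) (hr : 0 < r) : ∑ k ∈ S, Real.posLog (r / j k) ≤ r / Real.pi := by
  classical
  obtain ⟨hmono, hpos, hz, -⟩ := hj
  have hinj : Set.InjOn (fun k => ((j k : ℂ)) ^ 2) S := by
    intro a _ b _ hab
    simp only at hab
    have : (j a) ^ 2 = (j b) ^ 2 := by exact_mod_cast hab
    exact hmono.injective ((sq_eq_sq₀ (hpos a).le (hpos b).le).1 this)
  have h := (bz_jensen_gen (bzF ν) (bzF_diff ν hν) (bzF_zero ν hν)
    (S.image (fun k => ((j k : ℂ)) ^ 2)) (by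
      intro u hu
      obtain ⟨k, -, rfl⟩ := Finset.mem_image.1 hu
      exact bzF_zero_of_bessel ν hν _ (hpos k) (hz k)) (r^2) (by positivity)).trans
      (bz_avg ν hν r hr)
  rw [Finset.sum_image hinj] at h
  have e : ∀ k, Real.posLog (r ^ 2 / ‖((j k : ℂ)) ^ 2‖) = 2 * Real.posLog (r / j k) := by
    intro k
    rw [norm_pow, Complex.norm_real, Real.norm_eq_abs, sq_abs, ← div_pow, Real.posLog_pow]
    norm_num
  simp only [e, ← Finset.mul_sum] at h
  have : 2 * r / Real.pi = 2 * (r / Real.pi) := by ring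
  linarith

noncomputable def bzW (p : ℕ) (r : ℝ) : ℝ := 2 * p * r ^ (p - 1) / (r ^ p + 1) ^ 2

lemma bzW_nonneg (p : ℕ) (r : ℝ) (hr : 0 ≤ r) : 0 ≤ bzW p r := by
  unfold bzW; positivity

lemma bz_tendsto_log (p : ℕ) (hp : 1 ≤ p) (a : ℝ) (ha : 0 < a) :
    Filter.Tendsto (fun r => Real.log (r / a) / (r ^ p + 1)) Filter.atTop (nhds 0) := by
  have h1 := Real.tendsto_pow_log_div_mul_add_atTop 1 0 1 one_ne_zero
  have h2 : Filter.Tendsto (fun r : ℝ => Real.log a / r) Filter.atTop (nhds 0) :=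
    Filter.Tendsto.const_div_atTop Filter.tendsto_id _
  have h3 := h1.sub h2
  rw [sub_zero] at h3
  refine tendsto_of_tendsto_of_tendsto_of_le_of_le' tendsto_const_nhds h3 ?_ ?_
  · filter_upwards [Filter.eventually_ge_atTop a, Filter.eventually_ge_atTop 1] with r hr hr1
    have : 0 ≤ Real.log (r / a) := Real.log_nonneg (by rwa [one_le_div ha])
    positivity
  · filter_upwards [Filter.eventually_ge_atTop a, Filter.eventually_ge_atTop 1] with r hr hr1
    have : 0 ≤ Real.log (r / a) := Real.log_nonneg (by rwa [one_le_div ha])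
    have h4 : r ≤ r ^ p + 1 := by
      have := le_self_pow₀ hr1 (by omega : p ≠ 0); linarith
    calc Real.log (r / a) / (r ^ p + 1) ≤ Real.log (r / a) / r := by gcongr
      _ = _ := by rw [Real.log_div (by positivity) (by positivity)]; simp; ring

lemma bz_L1 (p : ℕ) (hp : 1 ≤ p) (a : ℝ) (ha : 0 < a) :
    IntegrableOn (fun r => Real.posLog (r / a) * bzW p r) (Ioi 0) ∧
    ∫ r in Ioi 0, Real.posLog (r / a) * bzW p r = 2 / p * Real.log (1 + (1 / a) ^ p) := by
  set G : ℝ → ℝ := fun r => -2 * (Real.log (r / a) / (r ^ p + 1)) +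
    (2 * Real.log r - 2 / p * Real.log (r ^ p + 1)) with hG
  set g : ℝ → ℝ := fun r => Real.log (r / a) * bzW p r with hg
  have hp0 : (p : ℝ) ≠ 0 := by positivity
  have hder : ∀ r ∈ Ici a, HasDerivAt G (g r) r := by
    intro r hr
    have hr0 : 0 < r := lt_of_lt_of_le ha hr
    have d1 : HasDerivAt (fun r : ℝ => r ^ p + 1) (p * r ^ (p - 1)) r :=
      (hasDerivAt_pow p r).add_const 1
    have d2 : HasDerivAt (fun r : ℝ => Real.log (r / a)) (1 / a / (r / a)) r :=
      ((hasDerivAt_id r).div_const a).log (by positivity)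
    have hne : r ^ p + 1 ≠ 0 := by positivity
    have d3 := ((d2.div d1 hne).const_mul (-2)).add
      (((Real.hasDerivAt_log hr0.ne').const_mul 2).sub ((d1.log hne).const_mul (2 / (p:ℝ))))
    refine d3.congr_deriv ?_
    simp only [hg, bzW]
    obtain ⟨q, rfl⟩ : ∃ q, p = q + 1 := ⟨p - 1, by omega⟩
    simp only [Nat.add_sub_cancel]
    generalize Real.log (r / a) = L
    have hne' : r * r ^ q + 1 ≠ 0 := by positivity
    rw [pow_succ'] at hne ⊢
    field_simp
    ring
  have hpos : ∀ r ∈ Ioi a, 0 ≤ g r := by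
    intro r hr
    have hr' : a < r := hr
    exact mul_nonneg (Real.log_nonneg (by rw [one_le_div ha]; exact hr'.le))
      (bzW_nonneg p r (ha.trans hr').le)
  have hlim : Filter.Tendsto G Filter.atTop (nhds 0) := by
    have h1 := (bz_tendsto_log p hp a ha).const_mul (-2)
    have h2 : Filter.Tendsto (fun r : ℝ => -(2 / (p:ℝ)) * Real.log (1 + 1 / r ^ p)) Filter.atTop (nhds 0) := by
      have : Filter.Tendsto (fun r : ℝ => 1 + 1 / r ^ p) Filter.atTop (nhds (1 + 0)) :=
        (Filter.Tendsto.const_div_atTop (Filter.tendsto_pow_atTop (by omega)) 1).const_add 1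
      have := (this.log (by norm_num)).const_mul (-(2 / (p:ℝ)))
      simpa using this
    have h3 := h1.add h2
    simp only [mul_zero, add_zero] at h3
    refine h3.congr' ?_
    filter_upwards [Filter.eventually_gt_atTop 0] with r hr
    simp only [hG]
    have : 1 + 1 / r ^ p = (r ^ p + 1) / r ^ p := by field_simp
    rw [this, Real.log_div (x := r ^ p + 1) (by positivity) (by positivity), Real.log_pow]
    field_simp
    ring
  have hi := integrableOn_Ioi_deriv_of_nonneg' hder hpos hlim
  have hv := integral_Ioi_of_hasDerivAt_of_nonneg' hder hpos hlim
  have e1 : EqOn g (fun r => Real.posLog (r / a) * bzW p r) (Ioi a) := by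
    intro r hr
    have hr' : a < r := hr
    have : 1 ≤ r / a := by rw [one_le_div ha]; exact hr'.le
    simp only [hg]
    rw [Real.posLog_eq_log (by rw [abs_of_nonneg (by linarith)]; exact this)]
  have e0 : EqOn (fun _ => (0:ℝ)) (fun r => Real.posLog (r / a) * bzW p r) (Ioc 0 a) := by
    intro r hr
    simp only
    rw [(Real.posLog_eq_zero_iff (r / a)).2, zero_mul]
    rw [abs_of_nonneg (div_nonneg hr.1.le ha.le), div_le_one ha]; exact hr.2
  have hi1 := hi.congr_fun e1 measurableSet_Ioi
  have hi0 : IntegrableOn (fun r => Real.posLog (r / a) * bzW p r) (Ioc 0 a) :=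
    (integrableOn_zero).congr_fun e0 measurableSet_Ioc
  have hu : Ioc 0 a ∪ Ioi a = Ioi (0:ℝ) := Ioc_union_Ioi_eq_Ioi ha.le
  refine ⟨hu ▸ hi0.union hi1, ?_⟩
  rw [← hu, setIntegral_union (Ioc_disjoint_Ioi le_rfl) measurableSet_Ioi hi0 hi1,
    ← setIntegral_congr_fun measurableSet_Ioc e0, ← setIntegral_congr_fun measurableSet_Ioi e1, hv]
  simp only [hG, integral_zero, div_self ha.ne', Real.log_one]
  have : 1 + (1 / a) ^ p = (a ^ p + 1) / a ^ p := by rw [div_pow, one_pow]; field_simp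
  rw [this, Real.log_div (by positivity) (by positivity), Real.log_pow]
  field_simp
  ring

lemma bz_L2_two : IntegrableOn (fun r => r * bzW 2 r) (Ioi 0) ∧
    ∫ r in Ioi 0, r * bzW 2 r = Real.pi := by
  set G : ℝ → ℝ := fun r => -2 * (r / (r ^ 2 + 1)) + 2 * Real.arctan r with hG
  have hder : ∀ r ∈ Ici (0:ℝ), HasDerivAt G (r * bzW 2 r) r := by
    intro r hr
    have d1 : HasDerivAt (fun r : ℝ => r ^ 2 + 1) ((2:ℕ) * r ^ (2 - 1)) r :=
      (hasDerivAt_pow 2 r).add_const 1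
    have hne : r ^ 2 + 1 ≠ 0 := by positivity
    have hne' : 1 + r ^ 2 ≠ 0 := by positivity
    have d3 := (((hasDerivAt_id r).div d1 hne).const_mul (-2)).add
      ((Real.hasDerivAt_arctan r).const_mul 2)
    refine d3.congr_deriv ?_
    simp only [bzW, id]
    field_simp
    norm_num
    ring
  have hpos : ∀ r ∈ Ioi (0:ℝ), 0 ≤ r * bzW 2 r := fun r hr =>
    mul_nonneg (le_of_lt hr) (bzW_nonneg 2 r (le_of_lt hr))
  have hlim : Filter.Tendsto G Filter.atTop (nhds Real.pi) := by
    have h1 : Filter.Tendsto (fun r : ℝ => r / (r ^ 2 + 1)) Filter.atTop (nhds 0) := by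
      refine tendsto_of_tendsto_of_tendsto_of_le_of_le' tendsto_const_nhds
        (Filter.Tendsto.const_div_atTop (r := (1:ℝ)) Filter.tendsto_id) ?_ ?_
      · filter_upwards [Filter.eventually_ge_atTop 1] with r hr
        positivity
      · filter_upwards [Filter.eventually_ge_atTop 1] with r hr
        simp only [id]
        rw [div_le_div_iff₀ (by positivity) (by positivity)]
        nlinarith
    have h2 := (Real.tendsto_arctan_atTop.mono_right nhdsWithin_le_nhds).const_mul 2
    have h3 := (h1.const_mul (-2)).add h2
    convert h3 using 2
    ring
  refine ⟨integrableOn_Ioi_deriv_of_nonneg' hder hpos hlim, ?_⟩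
  rw [integral_Ioi_of_hasDerivAt_of_nonneg' hder hpos hlim]
  simp [hG]

lemma bz_L2_four : IntegrableOn (fun r => r * bzW 4 r) (Ioi 0) ∧
    ∫ r in Ioi 0, r * bzW 4 r = Real.pi / Real.sqrt 2 := by
  set c := Real.sqrt 2 with hc
  have hc2 : c ^ 2 = 2 := Real.sq_sqrt (by norm_num)
  have hc0 : 0 < c := by positivity
  have hA : ∀ r : ℝ, 0 < r ^ 2 + c * r + 1 := fun r => by nlinarith [sq_nonneg (r + c / 2)]
  have hB : ∀ r : ℝ, 0 < r ^ 2 - c * r + 1 := fun r => by nlinarith [sq_nonneg (r - c / 2)]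
  set G : ℝ → ℝ := fun r => -2 * (r / (r ^ 4 + 1)) +
    (1 / (2 * c) * Real.log ((r ^ 2 + c * r + 1) / (r ^ 2 - c * r + 1)) +
    1 / c * (Real.arctan (c * r + 1) + Real.arctan (c * r - 1))) with hG
  have hder : ∀ r ∈ Ici (0:ℝ), HasDerivAt G (r * bzW 4 r) r := by
    intro r hr
    have d1 : HasDerivAt (fun r : ℝ => r ^ 4 + 1) ((4:ℕ) * r ^ (4 - 1)) r :=
      (hasDerivAt_pow 4 r).add_const 1
    have hne : r ^ 4 + 1 ≠ 0 := by positivity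
    have dc : HasDerivAt (fun r : ℝ => c * r) c r := by
      simpa using (hasDerivAt_id r).const_mul c
    have dA : HasDerivAt (fun r : ℝ => r ^ 2 + c * r + 1) ((2:ℕ) * r ^ (2 - 1) + c) r :=
      ((hasDerivAt_pow 2 r).add dc).add_const 1
    have dB : HasDerivAt (fun r : ℝ => r ^ 2 - c * r + 1) ((2:ℕ) * r ^ (2 - 1) - c) r :=
      ((hasDerivAt_pow 2 r).sub dc).add_const 1
    have hA' := (hA r).ne'
    have hB' := (hB r).ne'
    have d3 := (((hasDerivAt_id r).div d1 hne).const_mul (-2)).add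
      ((((dA.div dB hB').log (div_ne_zero hA' hB')).const_mul (1 / (2 * c))).add
      (((dc.add_const 1).arctan.add (dc.sub_const 1).arctan).const_mul (1 / c)))
    refine d3.congr_deriv ?_
    have e1 : 1 + (c * r + 1) ^ 2 = 2 * (r ^ 2 + c * r + 1) := by linear_combination r^2 * hc2
    have e2 : 1 + (c * r - 1) ^ 2 = 2 * (r ^ 2 - c * r + 1) := by linear_combination r^2 * hc2
    have e3 : r ^ 4 + 1 = (r ^ 2 + c * r + 1) * (r ^ 2 - c * r + 1) := by
      linear_combination r^2 * hc2
    have e4 : 1 / (2 * c) * ((((2:ℕ) * r ^ (2 - 1) + c) * (r ^ 2 - c * r + 1) -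
        (r ^ 2 + c * r + 1) * ((2:ℕ) * r ^ (2 - 1) - c)) / (r ^ 2 - c * r + 1) ^ 2 /
        ((r ^ 2 + c * r + 1) / (r ^ 2 - c * r + 1))) +
        1 / c * (1 / (1 + (c * r + 1) ^ 2) * c + 1 / (1 + (c * r - 1) ^ 2) * c) =
        2 / (r ^ 4 + 1) := by
      rw [e1, e2, e3]
      set A := r ^ 2 + c * r + 1 with hAd
      set B := r ^ 2 - c * r + 1 with hBd
      field_simp
      norm_num
      rw [hAd, hBd]
      ring
    simp only [Pi.div_apply, id] at *
    rw [e4]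
    simp only [bzW]
    field_simp
    norm_num
  have hpos : ∀ r ∈ Ioi (0:ℝ), 0 ≤ r * bzW 4 r := fun r hr =>
    mul_nonneg (le_of_lt hr) (bzW_nonneg 4 r (le_of_lt hr))
  have hlim : Filter.Tendsto G Filter.atTop (nhds (Real.pi / c)) := by
    have h1 : Filter.Tendsto (fun r : ℝ => r / (r ^ 4 + 1)) Filter.atTop (nhds 0) := by
      refine tendsto_of_tendsto_of_tendsto_of_le_of_le' tendsto_const_nhds
        (Filter.Tendsto.const_div_atTop (r := (1:ℝ)) Filter.tendsto_id) ?_ ?_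
      · filter_upwards [Filter.eventually_ge_atTop 1] with r hr
        positivity
      · filter_upwards [Filter.eventually_ge_atTop 1] with r hr
        simp only [id]
        rw [div_le_div_iff₀ (by positivity) (by positivity)]
        nlinarith [sq_nonneg (r^2 - 1), sq_nonneg (r - 1)]
    have hcr : Filter.Tendsto (fun r : ℝ => c * r) Filter.atTop Filter.atTop :=
      Filter.tendsto_id.const_mul_atTop hc0
    have hat := (Real.tendsto_arctan_atTop.mono_right nhdsWithin_le_nhds)
    have h2 := (hat.comp (Filter.tendsto_atTop_add_const_right _ 1 hcr)).add
      (hat.comp (Filter.tendsto_atTop_add_const_right _ (-1) hcr))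
    have hlog : Filter.Tendsto (fun r : ℝ => Real.log ((r ^ 2 + c * r + 1) / (r ^ 2 - c * r + 1)))
        Filter.atTop (nhds 0) := by
      have i1 : Filter.Tendsto (fun r : ℝ => r⁻¹) Filter.atTop (nhds 0) := tendsto_inv_atTop_zero
      have i2 : Filter.Tendsto (fun r : ℝ => (1 + c * r⁻¹ + r⁻¹ ^ 2) / (1 - c * r⁻¹ + r⁻¹ ^ 2))
          Filter.atTop (nhds ((1 + c * 0 + 0 ^ 2) / (1 - c * 0 + 0 ^ 2))) := by
        apply Filter.Tendsto.div
        · exact ((i1.const_mul c).const_add 1).add (i1.pow 2)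
        · exact ((i1.const_mul c).const_sub 1).add (i1.pow 2)
        · norm_num
      have i3 := i2.log (by norm_num)
      norm_num at i3
      refine i3.congr' ?_
      filter_upwards [Filter.eventually_gt_atTop 0] with r hr
      congr 1
      have hA' := (hA r).ne'
      have hB' := (hB r).ne'
      have x1 : 1 + c * r⁻¹ + (r^2)⁻¹ = (r ^ 2 + c * r + 1) / r ^ 2 := by field_simp
      have x2 : 1 - c * r⁻¹ + (r^2)⁻¹ = (r ^ 2 - c * r + 1) / r ^ 2 := by field_simp
      rw [x1, x2]
      field_simp
    have h3 := (h1.const_mul (-2)).add ((hlog.const_mul (1 / (2 * c))).add (h2.const_mul (1 / c)))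
    have hv : -2 * 0 + (1 / (2 * c) * 0 + 1 / c * (Real.pi / 2 + Real.pi / 2)) = Real.pi / c := by
      ring
    rw [hv] at h3
    exact h3
  refine ⟨integrableOn_Ioi_deriv_of_nonneg' hder hpos hlim, ?_⟩
  rw [integral_Ioi_of_hasDerivAt_of_nonneg' hder hpos hlim]
  simp [hG, Real.arctan_neg]

lemma bz_final (p : ℕ) (hp : 1 ≤ p) (C : ℝ) (hi : IntegrableOn (fun r => r * bzW p r) (Ioi 0))
    (hC : ∫ r in Ioi 0, r * bzW p r = C) (j : ℕ → ℝ) (hj : ∀ k, 0 < j k) (S : Finset ℕ)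
    (h : ∀ r, 0 < r → ∑ k ∈ S, Real.posLog (r / j k) ≤ r / Real.pi) (t : ℝ) (ht : 0 < t) :
    ∑ k ∈ S, 2 / p * Real.log (1 + (t / j k) ^ p) ≤ t * C / Real.pi := by
  have e : ∀ k, 2 / p * Real.log (1 + (t / j k) ^ p) =
      ∫ r in Ioi 0, Real.posLog (r / (j k / t)) * bzW p r := by
    intro k
    rw [(bz_L1 p hp (j k / t) (div_pos (hj k) ht)).2, one_div_div]
  simp only [e]
  rw [← integral_finsetSum]
  · have : t * C / Real.pi = ∫ r in Ioi 0, t / Real.pi * (r * bzW p r) := by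
      rw [integral_const_mul, hC]; ring
    rw [this]
    apply setIntegral_mono_on
    · exact integrable_finsetSum _ fun k _ => (bz_L1 p hp (j k / t) (div_pos (hj k) ht)).1
    · exact hi.const_mul _
    · exact measurableSet_Ioi
    · intro r hr
      have hr : 0 < r := hr
      rw [← Finset.sum_mul, ← mul_assoc]
      apply mul_le_mul_of_nonneg_right _ (bzW_nonneg p r hr.le)
      have := h (r * t) (by positivity)
      calc _ = ∑ k ∈ S, Real.posLog (r * t / j k) := by
            apply Finset.sum_congr rfl; intro k _; congr 1; rw [div_div_eq_mul_div]
        _ ≤ _ := this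
        _ = _ := by ring
  · exact fun k _ => (bz_L1 p hp (j k / t) (div_pos (hj k) ht)).1

lemma bz_tprod (f : ℕ → ℂ) (B : ℝ) (hB : 1 ≤ B) (h : ∀ S : Finset ℕ, ∏ k ∈ S, ‖f k‖ ≤ B) :
    ‖∏' k, f k‖ ≤ B := by
  by_cases hm : Multipliable f
  · have := hm.hasProd.norm
    refine le_of_tendsto this (Filter.Eventually.of_forall fun S => ?_)
    exact h S
  · rw [tprod_eq_one_of_not_multipliable hm]
    simpa using hB

theorem stmt12 (ν κ : ℝ) (hν : 0 ≤ ν) (hκ : 0 < κ) (j : ℕ → ℝ)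
    (hj : IsBesselZeros ν j) :
    (∀ z : ℂ, ‖∏' k : ℕ, (1 + Complex.I * z / ((κ * j k : ℝ) : ℂ) ^ 2)‖ ≤
      Real.exp (Real.sqrt ‖z‖ / κ)) ∧
    (∀ x : ℝ, ‖∏' k : ℕ, (1 + Complex.I * (x : ℂ) / ((κ * j k : ℝ) : ℂ) ^ 2)‖ ≤
      Real.exp (Real.sqrt |x| / (Real.sqrt 2 * κ))) := by
  have hpos : ∀ k, 0 < j k := hj.2.1
  have hpi := Real.pi_pos
  constructor
  · intro z
    apply bz_tprod _ _ (Real.one_le_exp (by positivity))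
    intro S
    rcases eq_or_ne z 0 with rfl | hz
    · simp
    have hz' := norm_pos_iff.2 hz
    set t := Real.sqrt ‖z‖ / κ with ht
    have ht0 : 0 < t := by positivity
    have ht2 : t ^ 2 = ‖z‖ / κ ^ 2 := by rw [ht, div_pow, Real.sq_sqrt hz'.le]
    have h := bz_final 2 (by norm_num) _ bz_L2_two.1 bz_L2_two.2 j hpos S
      (fun r hr => bz_jensen ν hν j hj S r hr) t ht0
    rw [mul_div_cancel_right₀ _ hpi.ne'] at h
    refine le_trans ?_ (Real.exp_le_exp.2 h)
    rw [Real.exp_sum]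
    apply Finset.prod_le_prod (fun _ _ => norm_nonneg _)
    intro k _
    have hk := hpos k
    rw [show (2:ℝ) / (2:ℕ) = 1 by norm_num, one_mul, Real.exp_log (by positivity), div_pow, ht2]
    refine (norm_add_le _ _).trans ?_
    rw [norm_div, norm_mul, norm_pow, Complex.norm_real, Real.norm_eq_abs, sq_abs, mul_pow]
    simp [div_div]
  · intro x
    apply bz_tprod _ _ (Real.one_le_exp (by positivity))
    intro S
    rcases eq_or_ne x 0 with rfl | hx
    · simp
    have hx' := abs_pos.2 hx
    set t := Real.sqrt |x| / κ with ht
    have ht0 : 0 < t := by positivity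
    have ht4 : t ^ 4 = x ^ 2 / κ ^ 4 := by
      rw [ht, div_pow, show 4 = 2 * 2 by norm_num, pow_mul (Real.sqrt _), Real.sq_sqrt hx'.le, sq_abs]
    have h := bz_final 4 (by norm_num) _ bz_L2_four.1 bz_L2_four.2 j hpos S
      (fun r hr => bz_jensen ν hν j hj S r hr) t ht0
    have e : t * (Real.pi / Real.sqrt 2) / Real.pi = Real.sqrt |x| / (Real.sqrt 2 * κ) := by
      rw [ht]; field_simp
    rw [e] at h
    refine le_trans ?_ (Real.exp_le_exp.2 h)
    rw [Real.exp_sum]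
    apply Finset.prod_le_prod (fun _ _ => norm_nonneg _)
    intro k _
    have hk := hpos k
    have hn : ‖1 + Complex.I * (x : ℂ) / ((κ * j k : ℝ) : ℂ) ^ 2‖ =
        Real.sqrt (1 + (t / j k) ^ 4) := by
      have : 1 + Complex.I * (x : ℂ) / ((κ * j k : ℝ) : ℂ) ^ 2 =
          ((1 : ℝ) : ℂ) + ((x / (κ * j k) ^ 2 : ℝ) : ℂ) * Complex.I := by
        push_cast; ring
      rw [this, Complex.norm_add_mul_I, div_pow t, ht4]
      congr 1
      field_simp
    rw [hn, show (2:ℝ) / (4:ℕ) = 1 / 2 by norm_num, Real.sqrt_eq_rpow,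
      Real.rpow_def_of_pos (by positivity), mul_comm]
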